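/- Let n ≥ 2 be an integer, t > 0, and set c := n³(n−1). For t′ > 0 let p_{t′}(x) = (2^{t′−2}/(π·Γ(t′))) · ‖Γ((t′ + ix)/2)‖² be the continuous binomial/Beta density, and define q_t := p_{2nt/c}. Then q_t is a probability density on ℝ (q_t ≥ 0 and ∫_ℝ q_t = 1), and for every real s with √(c/2)·|s| < π/2, ∫_{−∞}^{∞} e^{s·√(c/2)·x} · q_t(x) dx = (cos(√(c/2)·s))^{−2nt/c}. -/

import Mathlib

open MeasureTheory

open Complex Set Filter Topology in
lemma aux_laplace {a : ℂ} (ha : 0 < a.re) {k : ℂ} (hk : 0 < k.re) :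
    ∫ r : ℝ in Ioi 0, (r:ℂ) ^ (a - 1) * cexp (-(k * r)) = (1 / k) ^ a * Complex.Gamma a := by
  have hopen : IsOpen {k : ℂ | 0 < k.re} := isOpen_lt continuous_const Complex.continuous_re
  have key : EqOn (fun k : ℂ => ∫ r : ℝ in Ioi 0, (r:ℂ) ^ (a - 1) * cexp (-(k * r)))
      (fun k : ℂ => (1 / k) ^ a * Complex.Gamma a) {k : ℂ | 0 < k.re} := by
    refine AnalyticOnNhd.eqOn_of_preconnected_of_frequently_eq (z₀ := 1) ?_ ?_ ?_ ?_ ?_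
    · refine DifferentiableOn.analyticOnNhd ?_ hopen
      intro k hk
      have hk : 0 < k.re := hk
      have hcont : ∀ z k : ℂ, ContinuousOn (fun r : ℝ => (r:ℂ) ^ z * cexp (-(k * r))) (Ioi 0) := by
        intro z k
        refine ContinuousOn.mul ?_ (by fun_prop)
        intro r hr
        exact (Complex.continuousAt_ofReal_cpow_const r z (Or.inr (ne_of_gt hr))).continuousWithinAt
      have hnorm : ∀ (z k : ℂ) (r : ℝ), 0 < r →
          ‖(r:ℂ) ^ z * cexp (-(k * r))‖ = r ^ z.re * Real.exp (-k.re * r) := by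
        intro z k r hr
        rw [norm_mul, Complex.norm_cpow_eq_rpow_re_of_pos hr, Complex.norm_exp]
        simp
      have hbint : ∀ σ b : ℝ, -1 < σ → 0 < b →
          IntegrableOn (fun r : ℝ => r ^ σ * Real.exp (-b * r)) (Ioi 0) := by
        intro σ b hσ hb
        simpa using integrableOn_rpow_mul_exp_neg_mul_rpow hσ one_pos hb
      have hF : Integrable (fun r : ℝ => (r:ℂ) ^ (a-1) * cexp (-(k * r)))
          (volume.restrict (Ioi 0)) := by
        refine Integrable.mono' (hbint (a-1).re k.re (by simp [ha]) hk)
          ((hcont _ _).aestronglyMeasurable measurableSet_Ioi) ?_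
        filter_upwards [ae_restrict_mem measurableSet_Ioi] with r hr
        exact (hnorm _ _ r hr).le
      have := hasDerivAt_integral_of_dominated_loc_of_deriv_le (𝕜 := ℂ)
        (μ := volume.restrict (Ioi (0:ℝ)))
        (F := fun (k : ℂ) (r : ℝ) => (r:ℂ) ^ (a-1) * cexp (-(k * r))) (x₀ := k)
        (s := {z : ℂ | k.re / 2 < z.re})
        (F' := fun (k : ℂ) (r : ℝ) => - ((r:ℂ) ^ a * cexp (-(k * r))))
        (bound := fun r : ℝ => r ^ a.re * Real.exp (-(k.re / 2) * r))
        ((isOpen_lt continuous_const Complex.continuous_re).mem_nhds (by simp; linarith))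
        (Eventually.of_forall fun z => (hcont _ _).aestronglyMeasurable measurableSet_Ioi)
        hF
        ((hcont _ _).neg.aestronglyMeasurable measurableSet_Ioi)
        (by
          filter_upwards [ae_restrict_mem measurableSet_Ioi] with r hr z hz
          have hr : 0 < r := hr
          have hz : k.re / 2 < z.re := hz
          rw [norm_neg, hnorm _ _ r hr]
          gcongr)
        (hbint _ _ (by linarith) (by linarith))
        (by
          filter_upwards [ae_restrict_mem measurableSet_Ioi] with r hr z hz
          have hr : 0 < r := hr
          have h1 : HasDerivAt (fun z : ℂ => -(z * r)) (-(1 * (r:ℂ))) z :=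
            ((hasDerivAt_id z).mul_const (r:ℂ)).neg
          have h2 := (h1.cexp).const_mul ((r:ℂ) ^ (a-1))
          refine h2.congr_deriv ?_
          have : (r:ℂ) ^ a = (r:ℂ) ^ (a-1) * r := by
            rw [Complex.cpow_sub _ _ (by exact_mod_cast hr.ne'), Complex.cpow_one]
            field_simp [show (r:ℂ) ≠ 0 by exact_mod_cast hr.ne']
          rw [this]; ring)
      exact this.2.differentiableAt.differentiableWithinAt
    · refine DifferentiableOn.analyticOnNhd ?_ hopen
      intro k hk
      have hk : 0 < k.re := hk
      have hk0 : k ≠ 0 := by rintro rfl; simp at hk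
      refine DifferentiableAt.differentiableWithinAt ?_
      refine DifferentiableAt.mul_const ?_ _
      refine DifferentiableAt.cpow_const (by fun_prop (disch := assumption)) ?_
      left
      rw [one_div, Complex.inv_re]
      exact div_pos hk (Complex.normSq_pos.mpr hk0)
    · exact (convex_halfSpace_re_gt 0).isPreconnected
    · simp
    · have h : Tendsto (fun n : ℕ => ((1 + 1 / ((n:ℝ) + 1) : ℝ) : ℂ)) atTop (𝓝[≠] 1) := by
        rw [tendsto_nhdsWithin_iff]
        constructor
        · have h0 := (tendsto_one_div_add_atTop_nhds_zero_nat (𝕜 := ℝ)).const_add 1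
          have := (Complex.continuous_ofReal.tendsto _).comp h0
          simpa [Function.comp_def] using this
        · refine Eventually.of_forall fun n => ?_
          have : (1 + 1 / ((n:ℝ) + 1) : ℝ) ≠ 1 := by
            have : 0 < 1 / ((n:ℝ) + 1) := by positivity
            linarith
          simp only [mem_compl_iff, mem_singleton_iff]
          exact_mod_cast this
      refine h.frequently (Frequently.of_forall fun n => ?_)
      exact Complex.integral_cpow_mul_exp_neg_mul_Ioi ha (by positivity)
  exact key hk

open FourierTransform in
lemma aux_plancherel {f : ℝ → ℂ} (hc : Continuous f) (hf : Integrable f) (hF : Integrable (𝓕 f)) :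
    ∫ ξ, ‖𝓕 f ξ‖ ^ 2 = ∫ x, ‖f x‖ ^ 2 := by
  have h : ∫ ξ, innerSL ℂ (𝓕 f ξ) (𝓕 f ξ) = ∫ x, innerSL ℂ (f x) (𝓕⁻ (𝓕 f) x) := by
    refine (VectorFourier.integral_sesq_fourierIntegral_eq_neg_flip (innerSL ℂ)
      (L := innerₗ ℝ) (μ := volume) (ν := volume) Real.continuous_fourierChar
      continuous_inner hf hF).trans ?_
    congr 1
    ext x
    rw [Real.fourierInv_eq]
    simp [VectorFourier.fourierIntegral]
  rw [hc.fourierInv_fourier_eq hf hF] at h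
  apply Complex.ofRealLI.injective
  simpa [← LinearIsometry.integral_comp_comm, inner_self_eq_norm_sq_to_K] using h

lemma aux_exp_abs {b : ℝ} (hb : 0 < b) : Integrable (fun x : ℝ => Real.exp (-b * |x|)) := by
  rw [← integrableOn_univ, ← Set.Iic_union_Ioi (a := (0:ℝ)), integrableOn_union]
  constructor
  · refine (integrableOn_exp_mul_Iic hb 0).congr_fun (fun x hx => ?_) measurableSet_Iic
    have hx : x ≤ 0 := hx
    simp only [abs_of_nonpos hx]; ring_nf
  · refine (integrableOn_exp_mul_Ioi (neg_lt_zero.mpr hb) 0).congr_fun (fun x hx => ?_)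
      measurableSet_Ioi
    have hx : 0 < x := hx
    simp only [abs_of_pos hx]

/-- The function whose Fourier transform is a Gamma function. -/
noncomputable def auxG (σ : ℝ) (k : ℂ) (u : ℝ) : ℂ :=
  Real.exp (-σ * u) • Complex.exp (-(k * (Real.exp (-u) : ℝ)))

open FourierTransform in
lemma auxG_fourier {σ : ℝ} (hσ : 0 < σ) {k : ℂ} (hk : 0 < k.re) (ξ : ℝ) :
    𝓕 (auxG σ k) ξ = (1 / k) ^ (σ + (2 * Real.pi * ξ : ℝ) * Complex.I : ℂ) *
      Complex.Gamma (σ + (2 * Real.pi * ξ : ℝ) * Complex.I) := by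
  have hre : (σ + (2 * Real.pi * ξ : ℝ) * Complex.I : ℂ).re = σ := by simp
  have him : (σ + (2 * Real.pi * ξ : ℝ) * Complex.I : ℂ).im = 2 * Real.pi * ξ := by simp
  rw [← aux_laplace (by rw [hre]; exact hσ) hk]
  have h := mellin_eq_fourier (fun r : ℝ => Complex.exp (-(k * r)))
    (s := (σ + (2 * Real.pi * ξ : ℝ) * Complex.I : ℂ))
  rw [hre, him, mul_div_cancel_left₀ _ (by positivity)] at h
  exact h.symm

lemma auxG_integral {σ : ℝ} (hσ : 0 < σ) {k : ℂ} (hk : 0 < k.re) :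
    ∫ u, auxG σ k u = (1 / k) ^ (σ : ℂ) * Complex.Gamma σ := by
  have h := auxG_fourier hσ hk 0
  rw [Real.fourier_eq] at h
  simpa using h

lemma auxG_norm (σ : ℝ) (k : ℂ) (u : ℝ) :
    ((‖auxG σ k u‖ : ℝ) : ℂ) = auxG σ (k.re : ℂ) u := by
  rw [auxG, norm_smul, Complex.norm_exp, auxG, Real.norm_of_nonneg (Real.exp_pos _).le]
  have : (-(k * (Real.exp (-u) : ℝ)) : ℂ).re = -(k.re * Real.exp (-u)) := by
    rw [Complex.neg_re, Complex.re_mul_ofReal]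
  rw [this, Complex.real_smul]
  push_cast
  rfl

lemma auxG_continuous (σ : ℝ) (k : ℂ) : Continuous (auxG σ k) := by
  unfold auxG; fun_prop

lemma auxG_integrable {σ : ℝ} (hσ : 0 < σ) {k : ℂ} (hk : 0 < k.re) : Integrable (auxG σ k) := by
  have h1 : Integrable (auxG σ (k.re : ℂ)) := by
    by_contra hcon
    have h := auxG_integral hσ (k := (k.re : ℂ)) (by simpa using hk)
    rw [integral_undef hcon] at h
    have hk0 : (k.re : ℂ) ≠ 0 := by exact_mod_cast hk.ne'
    have : (1 / (k.re : ℂ)) ^ (σ : ℂ) * Complex.Gamma σ ≠ 0 := by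
      refine mul_ne_zero ?_ (Complex.Gamma_ne_zero_of_re_pos (by simpa using hσ))
      rw [Ne, Complex.cpow_eq_zero_iff]
      simp [hk0]
    exact this h.symm
  refine Integrable.mono' h1.norm (auxG_continuous σ k).aestronglyMeasurable
    (Filter.Eventually.of_forall fun u => ?_)
  rw [← auxG_norm, Complex.norm_real]
  exact le_abs_self _

lemma auxG_norm_sq (σ : ℝ) (k : ℂ) (u : ℝ) :
    ((‖auxG σ k u‖ ^ 2 : ℝ) : ℂ) = auxG (2 * σ) ((2 * k.re : ℝ) : ℂ) u := by
  push_cast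
  rw [auxG_norm, auxG, auxG, Complex.real_smul, Complex.real_smul, mul_pow]
  push_cast
  rw [← Complex.exp_nat_mul, ← Complex.exp_nat_mul]
  push_cast
  ring_nf

lemma auxG_integral_norm_sq {σ : ℝ} (hσ : 0 < σ) {k : ℂ} (hk : 0 < k.re) :
    ∫ u, ‖auxG σ k u‖ ^ 2 = (1 / (2 * k.re)) ^ (2 * σ) * Real.Gamma (2 * σ) := by
  have h := auxG_integral (σ := 2 * σ) (by positivity) (k := ((2 * k.re : ℝ) : ℂ))
    (by simpa using hk)
  simp_rw [← auxG_norm_sq] at h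
  rw [integral_complex_ofReal, Complex.Gamma_ofReal, ← Complex.ofReal_one,
    ← Complex.ofReal_div, ← Complex.ofReal_cpow (by positivity)] at h
  exact_mod_cast h

/-- The rotation. -/
noncomputable def auxK (s : ℝ) : ℂ := Complex.exp (s * Complex.I)

lemma auxK_re (s : ℝ) : (auxK s).re = Real.cos s := by
  simp [auxK, Complex.exp_ofReal_mul_I_re]

lemma auxK_cos_pos {s : ℝ} (hs : |s| < Real.pi / 2) : 0 < (auxK s).re := by
  rw [auxK_re]
  rw [abs_lt] at hs
  exact Real.cos_pos_of_mem_Ioo ⟨hs.1, hs.2⟩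

open FourierTransform in
lemma auxG_fourier_norm {σ : ℝ} (hσ : 0 < σ) {s : ℝ} (hs : |s| < Real.pi / 2) (ξ : ℝ) :
    ‖𝓕 (auxG σ (auxK s)) ξ‖ = Real.exp (2 * Real.pi * ξ * s) *
      ‖Complex.Gamma (σ + (2 * Real.pi * ξ : ℝ) * Complex.I)‖ := by
  rw [auxG_fourier hσ (auxK_cos_pos hs), norm_mul]
  congr 1
  have h1 : 1 / auxK s = Complex.exp ((-s : ℝ) * Complex.I) := by
    rw [auxK, one_div, ← Complex.exp_neg]; push_cast; ring_nf
  have hb := abs_lt.mp hs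
  have hpi := Real.pi_pos
  rw [h1, Complex.cpow_def_of_ne_zero (Complex.exp_ne_zero _), Complex.log_exp, Complex.norm_exp]
  · congr 1
    simp
    ring
  · simp; linarith
  · simp; linarith

open FourierTransform in
lemma aux_gamma_bound {σ : ℝ} (hσ : 0 < σ) {θ : ℝ} (h0 : 0 ≤ θ) (hθ : θ < Real.pi / 2) :
    ∃ C : ℝ, ∀ ξ : ℝ, ‖Complex.Gamma (σ + (2 * Real.pi * ξ : ℝ) * Complex.I)‖ ≤
      C * Real.exp (-(2 * Real.pi * θ) * |ξ|) := by
  have key : ∀ s : ℝ, |s| < Real.pi / 2 → ∀ ξ : ℝ,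
      ‖Complex.Gamma (σ + (2 * Real.pi * ξ : ℝ) * Complex.I)‖ ≤
      (∫ u, ‖auxG σ (auxK s) u‖) * Real.exp (-(2 * Real.pi * ξ * s)) := by
    intro s hs ξ
    have h1 := auxG_fourier_norm hσ hs ξ
    have h2 : ‖𝓕 (auxG σ (auxK s)) ξ‖ ≤ ∫ u, ‖auxG σ (auxK s) u‖ :=
      VectorFourier.norm_fourierIntegral_le_integral_norm _ _ _ _ _
    rw [h1] at h2
    rw [Real.exp_neg, ← div_eq_mul_inv, le_div_iff₀ (Real.exp_pos _)]
    linarith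
  refine ⟨max (∫ u, ‖auxG σ (auxK θ) u‖) (∫ u, ‖auxG σ (auxK (-θ)) u‖), fun ξ => ?_⟩
  rcases le_total 0 ξ with h | h
  · refine (key θ (by rwa [abs_of_nonneg h0]) ξ).trans ?_
    rw [abs_of_nonneg h]
    have : -(2 * Real.pi * ξ * θ) = -(2 * Real.pi * θ) * ξ := by ring
    rw [this]
    gcongr
    exact le_max_left _ _
  · refine (key (-θ) (by rwa [abs_neg, abs_of_nonneg h0]) ξ).trans ?_
    rw [abs_of_nonpos h]
    have : -(2 * Real.pi * ξ * -θ) = -(2 * Real.pi * θ) * -ξ := by ring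
    rw [this]
    gcongr
    exact le_max_right _ _

open FourierTransform in
lemma auxG_fourier_integrable {σ : ℝ} (hσ : 0 < σ) {s : ℝ} (hs : |s| < Real.pi / 2) :
    Integrable (𝓕 (auxG σ (auxK s))) := by
  obtain ⟨θ, h1, h2⟩ := exists_between hs
  obtain ⟨C, hC⟩ := aux_gamma_bound hσ ((abs_nonneg s).trans h1.le) h2
  have hcont : Continuous (𝓕 (auxG σ (auxK s))) :=
    VectorFourier.fourierIntegral_continuous Real.continuous_fourierChar
      (by exact continuous_inner) (auxG_integrable hσ (auxK_cos_pos hs))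
  have hb : 0 < 2 * Real.pi * (θ - |s|) := by
    have := Real.pi_pos
    have : 0 < θ - |s| := by linarith
    positivity
  refine Integrable.mono' ((aux_exp_abs hb).const_mul C) hcont.aestronglyMeasurable
    (Filter.Eventually.of_forall fun ξ => ?_)
  rw [auxG_fourier_norm hσ hs]
  have hC0 : 0 ≤ C * Real.exp (-(2 * Real.pi * θ) * |ξ|) := (norm_nonneg _).trans (hC ξ)
  calc _ ≤ Real.exp (2 * Real.pi * (|ξ| * |s|)) * (C * Real.exp (-(2 * Real.pi * θ) * |ξ|)) := by
        have : ξ * s ≤ |ξ| * |s| := by rw [← abs_mul]; exact le_abs_self _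
        refine mul_le_mul (Real.exp_le_exp.mpr ?_) (hC ξ) (norm_nonneg _) (Real.exp_pos _).le
        rw [mul_assoc]
        exact mul_le_mul_of_nonneg_left this (by positivity)
    _ = C * Real.exp (-(2 * Real.pi * (θ - |s|)) * |ξ|) := by
        rw [mul_left_comm, ← Real.exp_add]; ring_nf

lemma aux_main {t : ℝ} (ht : 0 < t) {s : ℝ} (hs : |s| < Real.pi / 2) :
    ∫ x : ℝ, Real.exp (s * x) * (2 ^ (t - 2) / (Real.pi * Real.Gamma t) *
        ‖Complex.Gamma ((t + x * Complex.I) / 2)‖ ^ 2) = Real.cos s ^ (-t) := by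
  have hσ : 0 < t / 2 := by positivity
  have hpi := Real.pi_pos
  have hcos : 0 < Real.cos s := by rw [← auxK_re]; exact auxK_cos_pos hs
  have hP := aux_plancherel (auxG_continuous (t/2) (auxK s))
    (auxG_integrable hσ (auxK_cos_pos hs)) (auxG_fourier_integrable hσ hs)
  rw [auxG_integral_norm_sq hσ (auxK_cos_pos hs), auxK_re, mul_div_cancel₀ _ (two_ne_zero)] at hP
  simp_rw [auxG_fourier_norm hσ hs] at hP
  have hsub := Measure.integral_comp_mul_left (fun x : ℝ => Real.exp (s * x) *
        ‖Complex.Gamma ((t + x * Complex.I) / 2)‖ ^ 2) (4 * Real.pi)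
  have heq : ∀ ξ : ℝ, (Real.exp (2 * Real.pi * ξ * s) *
      ‖Complex.Gamma ((t / 2 : ℝ) + (2 * Real.pi * ξ : ℝ) * Complex.I)‖) ^ 2 =
      Real.exp (s * (4 * Real.pi * ξ)) *
        ‖Complex.Gamma ((t + (4 * Real.pi * ξ : ℝ) * Complex.I) / 2)‖ ^ 2 := by
    intro ξ
    rw [mul_pow, ← Real.exp_nat_mul]
    have e1 : ((2:ℕ):ℝ) * (2 * Real.pi * ξ * s) = s * (4 * Real.pi * ξ) := by push_cast; ring
    have e2 : (((t / 2 : ℝ) : ℂ) + (2 * Real.pi * ξ : ℝ) * Complex.I) =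
      (t + (4 * Real.pi * ξ : ℝ) * Complex.I) / 2 := by push_cast; ring
    rw [e1, e2]
  simp_rw [heq] at hP
  rw [hP, abs_of_pos (by positivity), smul_eq_mul] at hsub
  have hG := Real.Gamma_pos_of_pos ht
  have hI : ∫ x : ℝ, Real.exp (s * x) * ‖Complex.Gamma ((t + x * Complex.I) / 2)‖ ^ 2 =
      4 * Real.pi * ((1 / (2 * Real.cos s)) ^ t * Real.Gamma t) := by
    rw [hsub, mul_inv_cancel_left₀ (by positivity)]
  simp_rw [mul_left_comm (Real.exp _)]
  rw [integral_const_mul, hI, Real.rpow_sub two_pos, Real.rpow_neg hcos.le, one_div,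
    Real.inv_rpow (by positivity), Real.mul_rpow two_pos.le hcos.le]
  have h2 : (0:ℝ) < 2 ^ t := by positivity
  have h3 : (0:ℝ) < Real.cos s ^ t := by positivity
  norm_num
  field_simp

theorem trhpwn_scaled_beta_mgf (n : ℕ) (hn : 2 ≤ n) (t : ℝ) (ht : 0 < t)
    (c : ℝ) (hc : c = n ^ 3 * (n - 1))
    (p : ℝ → ℝ → ℝ)
    (hp : ∀ t' : ℝ, 0 < t' → ∀ x : ℝ,
      p t' x = 2 ^ (t' - 2) / (Real.pi * Real.Gamma t') *
        ‖Complex.Gamma ((t' + x * Complex.I) / 2)‖ ^ 2)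
    (q : ℝ → ℝ) (hq : q = p (2 * n * t / c)) :
    (∀ x : ℝ, 0 ≤ q x) ∧ (∫ x : ℝ, q x) = 1 ∧
    ∀ s : ℝ, Real.sqrt (c / 2) * |s| < Real.pi / 2 →
      ∫ x : ℝ, Real.exp (s * Real.sqrt (c / 2) * x) * q x =
        Real.cos (Real.sqrt (c / 2) * s) ^ (-(2 * n * t / c)) := by
  have hn' : (2:ℝ) ≤ n := by exact_mod_cast hn
  have hcpos : 0 < c := by
    rw [hc]
    have : (0:ℝ) < n - 1 := by linarith
    positivity
  have hT : 0 < 2 * n * t / c := by positivity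
  generalize 2 * n * t / c = T at *
  have hqx : ∀ x, q x = 2 ^ (T - 2) / (Real.pi * Real.Gamma T) *
        ‖Complex.Gamma ((T + x * Complex.I) / 2)‖ ^ 2 := fun x => by rw [hq, hp T hT]
  have hG := Real.Gamma_pos_of_pos hT
  have hpi := Real.pi_pos
  refine ⟨fun x => ?_, ?_, fun s hs => ?_⟩
  · rw [hqx]; positivity
  · have := aux_main hT (s := 0) (by simpa using hpi)
    simp_rw [← hqx] at this
    simpa using this
  · have := aux_main hT (s := s * Real.sqrt (c / 2))
      (by rw [abs_mul, abs_of_nonneg (Real.sqrt_nonneg _), mul_comm]; exact hs)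
    simp_rw [← hqx] at this
    rw [this, mul_comm s]
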